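/- Let H be a 3-partite 3-graph. Then τ(H) ≤ 2ν(H), where τ(H) is the minimum size of a vertex cover of H and ν(H) is the maximum size of a matching in H (Aharoni's Theorem). -/

import Mathlib

namespace Tripartite

/-- The degree of a vertex `a` in the first class of a 3-partite 3-multihypergraph,
whose edges are given as a multiset of triples (so parallel edges are allowed). -/
def deg1 {α β γ : Type*} [DecidableEq α] (H : Multiset (α × β × γ)) (a : α) : ℕ :=
  (H.filter fun e => e.1 = a).card

/-- The degree of a vertex `b` in the second class. -/
def deg2 {α β γ : Type*} [DecidableEq β] (H : Multiset (α × β × γ)) (b : β) : ℕ :=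
  (H.filter fun e => e.2.1 = b).card

/-- The degree of a vertex `c` in the third class. -/
def deg3 {α β γ : Type*} [DecidableEq γ] (H : Multiset (α × β × γ)) (c : γ) : ℕ :=
  (H.filter fun e => e.2.2 = c).card

/-- `H` is `r`-regular: every vertex of every class has degree exactly `r`. -/
def IsRegular {α β γ : Type*} [DecidableEq α] [DecidableEq β] [DecidableEq γ]
    (H : Multiset (α × β × γ)) (r : ℕ) : Prop :=
  (∀ a, deg1 H a = r) ∧ (∀ b, deg2 H b = r) ∧ (∀ c, deg3 H c = r)

/-- A matching of `H`: a set of edges of `H` that are pairwise disjoint. -/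
def IsMatching {α β γ : Type*} (H : Multiset (α × β × γ)) (M : Finset (α × β × γ)) : Prop :=
  (∀ e ∈ M, e ∈ H) ∧
  ∀ e ∈ M, ∀ f ∈ M, e ≠ f → e.1 ≠ f.1 ∧ e.2.1 ≠ f.2.1 ∧ e.2.2 ≠ f.2.2

/-- The matching number ν(H): the maximum size of a matching of `H`. -/
noncomputable def matchNum {α β γ : Type*} (H : Multiset (α × β × γ)) : ℕ :=
  sSup {k | ∃ M : Finset (α × β × γ), IsMatching H M ∧ M.card = k}

/-- A vertex cover of `H`: a set of vertices (given by its intersection with each of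
the three classes) meeting every edge of `H`. -/
def IsCover {α β γ : Type*} (H : Multiset (α × β × γ))
    (S1 : Finset α) (S2 : Finset β) (S3 : Finset γ) : Prop :=
  ∀ e ∈ H, e.1 ∈ S1 ∨ e.2.1 ∈ S2 ∨ e.2.2 ∈ S3

/-- The vertex cover number τ(H): the minimum size of a vertex cover of `H`. -/
noncomputable def coverNum {α β γ : Type*} (H : Multiset (α × β × γ)) : ℕ :=
  sInf {k | ∃ (S1 : Finset α) (S2 : Finset β) (S3 : Finset γ),
    IsCover H S1 S2 S3 ∧ S1.card + S2.card + S3.card = k}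

/-!
Color every edge of a 3-partite 3-graph by its vertex in the first class, and join two edges when
they share a vertex of one of the other two classes. A matching is then an independent set in this
conflict graph whose colors are distinct. By the topological Hall theorem, an independent set using
each color exactly once exists as soon as, for every set `B` of colors, the independence complex on
the edges with color in `B` has vanishing reduced homology below degree `|B| - 1`, and by an
argument of Meshulam this holds if some independent set of edges cannot be dominated by fewer than
`|B|` edges. König's theorem turns a lower bound for the vertex covers into a large independent set
of edges with color in `B`. An edge dominates at most two edges of an independent set, one for each
of the two classes, and this is the origin of the factor 2. The deficiency version of these
statements gives the bound for matchings that do not use all the colors.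
-/

section ChainComplex

open Finsupp

variable {V ι : Type*}

/-- The chains with coefficients in `ZMod 2` on the full simplex with vertex set `V`. All finite
subsets of `V` are generators, `∅` included, so that the resulting homology is reduced. -/
abbrev Chain (V : Type*) := Finset V →₀ ZMod 2

lemma chain_hom_ext {M : Type*} [AddCommGroup M] [Module (ZMod 2) M]
    {f g : Chain V →ₗ[ZMod 2] M} (h : ∀ σ, f (single σ 1) = g (single σ 1)) : f = g :=
  lhom_ext' fun σ => LinearMap.ext_ring (h σ)

variable [DecidableEq ι]

/-- The map of chains induced by a map of vertices. It kills the generators on which that map is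
not injective, whose images are degenerate; injectivity is encoded by cardinalities. -/
noncomputable def pushforward (color : V → ι) : Chain V →ₗ[ZMod 2] Chain ι :=
  linearCombination (ZMod 2) fun σ =>
    if (σ.image color).card = σ.card then single (σ.image color) 1 else 0

@[simp]
lemma pushforward_single (color : V → ι) (σ : Finset V) :
    pushforward color (single σ 1) =
      if (σ.image color).card = σ.card then single (σ.image color) (1 : ZMod 2) else 0 := by
  simp [pushforward]

variable [DecidableEq V]

/-- The boundary map of the chain complex `Chain V`. -/
noncomputable def boundary : Chain V →ₗ[ZMod 2] Chain V :=
  linearCombination (ZMod 2) fun σ => ∑ v ∈ σ, single (σ.erase v) 1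

/-- The cone with apex `v` over a chain. It kills the generators that contain `v`, whose cones are
degenerate. -/
noncomputable def cone (v : V) : Chain V →ₗ[ZMod 2] Chain V :=
  linearCombination (ZMod 2) fun σ => if v ∈ σ then 0 else single (insert v σ) 1

/-- The link of `v` in a chain: the part of the chain that is a cone with apex `v`, with `v`
removed. -/
noncomputable def link (v : V) : Chain V →ₗ[ZMod 2] Chain V :=
  linearCombination (ZMod 2) fun σ => if v ∈ σ then single (σ.erase v) 1 else 0

@[simp]
lemma boundary_single (σ : Finset V) :
    boundary (single σ 1) = ∑ v ∈ σ, single (σ.erase v) (1 : ZMod 2) := by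
  simp [boundary]

@[simp]
lemma cone_single (v : V) (σ : Finset V) :
    cone v (single σ 1) = if v ∈ σ then 0 else single (insert v σ) (1 : ZMod 2) := by
  simp [cone]

@[simp]
lemma link_single (v : V) (σ : Finset V) :
    link v (single σ 1) = if v ∈ σ then single (σ.erase v) (1 : ZMod 2) else 0 := by
  simp [link]

lemma boundary_cone (v : V) (z : Chain V) : boundary (cone v z) = z + cone v (boundary z) := by
  suffices boundary ∘ₗ cone v = LinearMap.id + cone v ∘ₗ boundary from LinearMap.congr_fun this z
  refine chain_hom_ext fun σ => ?_
  simp only [LinearMap.comp_apply, LinearMap.add_apply, LinearMap.id_apply,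
    boundary_single, cone_single, map_sum]
  by_cases hv : v ∈ σ
  · rw [if_pos hv, map_zero, Finset.sum_eq_single_of_mem v hv fun u _ huv => if_pos
      (Finset.mem_erase.2 ⟨huv.symm, hv⟩), if_neg (Finset.notMem_erase v σ),
      Finset.insert_erase hv, ZModModule.add_self]
  · rw [if_neg hv, boundary_single, Finset.sum_insert hv, Finset.erase_insert hv]
    congr 1
    refine Finset.sum_congr rfl fun u hu => ?_
    rw [if_neg fun h => hv (Finset.mem_of_mem_erase h),
      Finset.erase_insert_of_ne (ne_of_mem_of_not_mem hu hv).symm]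

lemma single_insert {v : V} {σ : Finset V} (hv : v ∉ σ) :
    single (insert v σ) 1 = cone v (single σ 1) := by
  rw [cone_single, if_neg hv]

-- Every nonempty simplex is a cone over one of its facets, so that `boundary_cone` gives both this
-- identity and the naturality of the boundary by induction on the simplex.
lemma boundary_boundary (z : Chain V) : boundary (boundary z) = 0 := by
  suffices boundary ∘ₗ boundary = (0 : Chain V →ₗ[ZMod 2] Chain V) from LinearMap.congr_fun this z
  refine chain_hom_ext fun σ => ?_
  simp only [LinearMap.comp_apply, LinearMap.zero_apply]
  induction σ using Finset.induction_on with
  | empty => simp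
  | insert v σ hv ih =>
    rw [single_insert hv, boundary_cone, map_add, boundary_cone, ih, map_zero, add_zero,
      ZModModule.add_self]

lemma boundary_link (v : V) (z : Chain V) : boundary (link v z) = link v (boundary z) := by
  suffices boundary ∘ₗ link v = link v ∘ₗ boundary from LinearMap.congr_fun this z
  refine chain_hom_ext fun σ => ?_
  simp only [LinearMap.comp_apply, boundary_single, link_single, map_sum]
  by_cases hv : v ∈ σ
  · rw [if_pos hv, boundary_single, ← Finset.add_sum_erase σ _ hv,
      if_neg (Finset.notMem_erase v σ), zero_add]
    refine Finset.sum_congr rfl fun u hu => ?_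
    rw [if_pos (Finset.mem_erase.2 ⟨(Finset.ne_of_mem_erase hu).symm, hv⟩),
      Finset.erase_right_comm]
  · rw [if_neg hv, map_zero,
      Finset.sum_eq_zero fun u _ => if_neg fun h => hv (Finset.mem_of_mem_erase h)]

lemma pushforward_cone (color : V → ι) (v : V) (z : Chain V) :
    pushforward color (cone v z) = cone (color v) (pushforward color z) := by
  suffices pushforward color ∘ₗ cone v = cone (color v) ∘ₗ pushforward color from
    LinearMap.congr_fun this z
  refine chain_hom_ext fun σ => ?_
  simp only [LinearMap.comp_apply, cone_single, pushforward_single]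
  by_cases hv : v ∈ σ
  · have hcv : color v ∈ σ.image color := Finset.mem_image_of_mem color hv
    rw [if_pos hv, map_zero, apply_ite (cone (color v)), cone_single, if_pos hcv, map_zero,
      ite_self]
  rw [if_neg hv, pushforward_single, Finset.image_insert, Finset.card_insert_of_notMem hv,
    apply_ite (cone (color v)), cone_single, map_zero]
  by_cases hcv : color v ∈ σ.image color
  · rw [Finset.insert_eq_of_mem hcv, if_pos hcv, ite_self,
      if_neg (Finset.card_image_le.trans_lt (Nat.lt_succ_self _)).ne]
  · simp only [if_neg hcv, Finset.card_insert_of_notMem hcv, Nat.add_right_cancel_iff]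

lemma boundary_pushforward (color : V → ι) (z : Chain V) :
    boundary (pushforward color z) = pushforward color (boundary z) := by
  suffices boundary ∘ₗ pushforward color = pushforward color ∘ₗ boundary from
    LinearMap.congr_fun this z
  refine chain_hom_ext fun σ => ?_
  simp only [LinearMap.comp_apply]
  induction σ using Finset.induction_on with
  | empty => simp
  | insert v σ hv ih =>
    rw [single_insert hv, pushforward_cone, boundary_cone, boundary_cone, map_add,
      pushforward_cone, ih]

end ChainComplex

section IndependenceComplex

open Finsupp

variable {V : Type*} {G : SimpleGraph V}

/-- The chains of the independence complex of `G` on the vertex set `W` that are generated by the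
independent sets with `j` elements; in the usual grading these have degree `j - 1`. -/
noncomputable def indepChains (G : SimpleGraph V) (W : Finset V) (j : ℕ) :
    Submodule (ZMod 2) (Chain V) :=
  supported (ZMod 2) (ZMod 2) {σ | σ ⊆ W ∧ G.IsIndepSet σ ∧ σ.card = j}

/-- `D` dominates `I`: every vertex of `I` belongs to `D` or has a neighbour in `D`. The number of
vertices needed to dominate an independent set bounds the connectivity of the independence complex
from below. -/
def Dominates (G : SimpleGraph V) (D I : Finset V) : Prop :=
  ∀ x ∈ I, ∃ y ∈ D, x = y ∨ G.Adj y x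

lemma single_mem_indepChains {W σ : Finset V} {j : ℕ} (hW : σ ⊆ W) (hσ : G.IsIndepSet σ)
    (hj : σ.card = j) : single σ 1 ∈ indepChains G W j :=
  single_mem_supported _ _ ⟨hW, hσ, hj⟩

lemma indepChains_le {W : Finset V} {j : ℕ} {p : Submodule (ZMod 2) (Chain V)}
    (h : ∀ σ ⊆ W, G.IsIndepSet σ → σ.card = j → single σ 1 ∈ p) : indepChains G W j ≤ p := by
  rw [indepChains, supported_eq_span_single, Submodule.span_le]
  rintro _ ⟨σ, ⟨hW, hσ, hj⟩, rfl⟩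
  exact h σ hW hσ hj

lemma indepChains_mono {W W' : Finset V} (h : W ⊆ W') (j : ℕ) :
    indepChains G W j ≤ indepChains G W' j :=
  indepChains_le fun _ hW => single_mem_indepChains (hW.trans h)

lemma indepChains_zero_le (W W' : Finset V) : indepChains G W 0 ≤ indepChains G W' 0 :=
  indepChains_le fun _ _ hσ hj =>
    single_mem_indepChains (Finset.card_eq_zero.1 hj ▸ Finset.empty_subset W') hσ hj

variable [DecidableEq V]

lemma cone_mem_indepChains {W U : Finset V} {v : V} {j : ℕ} {z : Chain V} (hv : v ∈ W)
    (hUW : U ⊆ W) (hU : ∀ u ∈ U, ¬ G.Adj v u) (hz : z ∈ indepChains G U j) :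
    cone v z ∈ indepChains G W (j + 1) := by
  suffices indepChains G U j ≤ (indepChains G W (j + 1)).comap (cone v) from this hz
  refine indepChains_le fun σ hσU hσ hj => ?_
  rw [Submodule.mem_comap, cone_single]
  split_ifs with hvσ
  · exact zero_mem _
  · refine single_mem_indepChains (Finset.insert_subset hv (hσU.trans hUW)) ?_
      (by rw [Finset.card_insert_of_notMem hvσ, hj])
    rw [Finset.coe_insert]
    exact Set.Pairwise.insert hσ fun u hu _ =>
      ⟨hU u (hσU hu), fun huv => hU u (hσU hu) huv.symm⟩

/-- The reduced homology mod 2 of the independence complex of `G` on `W` vanishes in every degree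
below `k - 1`, that is, on the chains generated by sets with fewer than `k` elements. -/
def IsAcyclic (G : SimpleGraph V) (W : Finset V) (k : ℕ) : Prop :=
  ∀ j < k, ∀ z ∈ indepChains G W j, boundary z = 0 →
    ∃ w ∈ indepChains G W (j + 1), boundary w = z

lemma isAcyclic_zero (W : Finset V) : IsAcyclic G W 0 :=
  fun j hj => absurd hj (Nat.not_lt_zero j)

lemma isAcyclic_of_isolated {W : Finset V} {v : V} (hv : v ∈ W) (h : ∀ u ∈ W, ¬ G.Adj v u)
    (k : ℕ) : IsAcyclic G W k := by
  intro j _ z hz hbz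
  refine ⟨cone v z, cone_mem_indepChains hv subset_rfl h hz, ?_⟩
  rw [boundary_cone, hbz, map_zero, add_zero]

open Classical in
lemma link_mem_indepChains {W : Finset V} (v : V) {j : ℕ} {z : Chain V}
    (hz : z ∈ indepChains G W (j + 1)) :
    link v z ∈ indepChains G {u ∈ W.erase v | ¬ G.Adj v u} j := by
  suffices indepChains G W (j + 1) ≤
    (indepChains G {u ∈ W.erase v | ¬ G.Adj v u} j).comap (link v) from this hz
  refine indepChains_le fun σ hσW hσ hj => ?_
  rw [Submodule.mem_comap, link_single]
  split_ifs with hv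
  · refine single_mem_indepChains (fun u hu => ?_) (hσ.mono (Finset.erase_subset v σ))
      (by rw [Finset.card_erase_of_mem hv, hj, Nat.add_sub_cancel])
    obtain ⟨huv, huσ⟩ := Finset.mem_erase.1 hu
    exact Finset.mem_filter.2
      ⟨Finset.mem_erase.2 ⟨huv, hσW huσ⟩, hσ hv huσ huv.symm⟩
  · exact zero_mem _

lemma add_cone_link_mem_indepChains {W : Finset V} (v : V) {j : ℕ} {z : Chain V}
    (hz : z ∈ indepChains G W j) :
    z + cone v (link v z) ∈ indepChains G (W.erase v) j := by
  suffices indepChains G W j ≤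
    (indepChains G (W.erase v) j).comap (LinearMap.id + cone v ∘ₗ link v) from this hz
  refine indepChains_le fun σ hσW hσ hj => ?_
  simp only [Submodule.mem_comap, LinearMap.add_apply, LinearMap.id_apply, LinearMap.comp_apply,
    link_single]
  by_cases hv : v ∈ σ
  · rw [if_pos hv, ← single_insert (Finset.notMem_erase v σ), Finset.insert_erase hv,
      ZModModule.add_self]
    exact zero_mem _
  · rw [if_neg hv, map_zero, add_zero]
    exact single_mem_indepChains (Finset.subset_erase.2 ⟨hσW, hv⟩) hσ hj

-- The Mayer-Vietoris argument for the covering of the complex by the deletion of `v` and the star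
-- of `v`, which is a cone and meets the deletion in the link of `v`.
open Classical in
lemma isAcyclic_of_erase_of_link {W : Finset V} {v : V} (hv : v ∈ W) {k : ℕ}
    (hdel : IsAcyclic G (W.erase v) (k + 1))
    (hlink : IsAcyclic G {u ∈ W.erase v | ¬ G.Adj v u} k) : IsAcyclic G W (k + 1) := by
  intro j hj z hz hbz
  have hdelW := indepChains_mono (G := G) (Finset.erase_subset v W)
  obtain _ | j := j
  · obtain ⟨w, hw, hbw⟩ := hdel 0 hj z (indepChains_zero_le _ _ hz) hbz
    exact ⟨w, hdelW _ hw, hbw⟩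
  obtain ⟨x, hx, hbx⟩ := hlink j (Nat.lt_of_succ_lt_succ hj) (link v z) (link_mem_indepChains v hz)
    (by rw [boundary_link, hbz, map_zero])
  have hlinkdel := indepChains_mono (G := G) (Finset.filter_subset (¬ G.Adj v ·) (W.erase v))
  have hconex : cone v x ∈ indepChains G W (j + 1 + 1) := cone_mem_indepChains hv
    ((Finset.filter_subset _ _).trans (Finset.erase_subset v W))
    (fun u hu => (Finset.mem_filter.1 hu).2) hx
  have hz' : z + boundary (cone v x) ∈ indepChains G (W.erase v) (j + 1) := by
    rw [boundary_cone, hbx, add_left_comm]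
    exact add_mem (hlinkdel _ hx) (add_cone_link_mem_indepChains v hz)
  obtain ⟨w, hw, hbw⟩ := hdel (j + 1) hj _ hz' (by rw [map_add, hbz, boundary_boundary, add_zero])
  refine ⟨w + cone v x, add_mem (hdelW _ hw) hconex, ?_⟩
  rw [map_add, hbw, add_assoc, ZModModule.add_self, add_zero]

open Classical in
lemma isAcyclic_of_dominates {W I : Finset V} {k : ℕ} (hIW : I ⊆ W) (hI : G.IsIndepSet I)
    (hD : ∀ D ⊆ W, Dominates G D I → k ≤ D.card) : IsAcyclic G W k := by
  induction W using Finset.strongInduction generalizing I k with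
  | H W ih =>
    obtain _ | k := k
    · exact isAcyclic_zero W
    obtain rfl | ⟨x, hx⟩ := I.eq_empty_or_nonempty
    · exact absurd (hD ∅ (Finset.empty_subset W) (by simp [Dominates])) (by simp)
    by_cases hiso : ∀ u ∈ W, ¬ G.Adj x u
    · exact isAcyclic_of_isolated (hIW hx) hiso _
    push Not at hiso
    obtain ⟨v, hv, hxv⟩ := hiso
    have hvI : v ∉ I := fun h => hI hx h hxv.ne hxv
    have hlinkW : {u ∈ W.erase v | ¬ G.Adj v u} ⊆ W.erase v := Finset.filter_subset _ _
    refine isAcyclic_of_erase_of_link hv ?_ ?_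
    · exact ih _ (Finset.erase_ssubset hv) (Finset.subset_erase.2 ⟨hIW, hvI⟩) hI
        fun D hDW => hD D (hDW.trans (Finset.erase_subset v W))
    · refine ih _ (hlinkW.trans_ssubset (Finset.erase_ssubset hv)) (I := {u ∈ I | ¬ G.Adj v u})
        (Finset.filter_subset_filter _ (Finset.subset_erase.2 ⟨hIW, hvI⟩))
        (hI.mono (Finset.filter_subset _ I)) fun D hDW hDI => ?_
      have hins : Dominates G (insert v D) I := fun y hy => by
        by_cases hvy : G.Adj v y
        · exact ⟨v, Finset.mem_insert_self v D, .inr hvy⟩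
        · obtain ⟨d, hd, hyd⟩ := hDI y (Finset.mem_filter.2 ⟨hy, hvy⟩)
          exact ⟨d, Finset.mem_insert_of_mem hd, hyd⟩
      have hcard := hD (insert v D) (Finset.insert_subset hv
        (hDW.trans (hlinkW.trans (Finset.erase_subset v W)))) hins
      exact Nat.le_of_succ_le_succ (hcard.trans (Finset.card_insert_le v D))

end IndependenceComplex

section IndependentTransversals

open Finsupp

variable {V ι : Type*}

lemma exists_linearMap_single_eq_fill [DecidableEq ι] (fill : Finset ι → Chain V → Chain V) :
    ∃ φ : Chain ι →ₗ[ZMod 2] Chain V, φ (single ∅ 1) = single ∅ 1 ∧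
      ∀ B : Finset ι, B.Nonempty → φ (single B 1) = fill B (φ (boundary (single B 1))) := by
  let c : Finset ι → Chain V := Finset.strongInduction fun B c =>
    if B = ∅ then single ∅ 1 else fill B (∑ b : B, c (B.erase b) (Finset.erase_ssubset b.2))
  have hc (B : Finset ι) :
      c B = if B = ∅ then single ∅ 1 else fill B (∑ b : B, c (B.erase b)) :=
    Finset.strongInduction_eq _ B
  have hφ (B : Finset ι) : linearCombination (ZMod 2) c (single B 1) = c B := by simp
  refine ⟨linearCombination (ZMod 2) c, by rw [hφ, hc, if_pos rfl], fun B hB => ?_⟩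
  rw [hφ, hc, if_neg hB.ne_empty, boundary_single, map_sum, Finset.sum_congr rfl fun b _ => hφ _,
    Finset.sum_coe_sort B fun b => c (B.erase b)]

lemma image_eq_of_subset_filter_of_card_image_eq [DecidableEq ι] {color : V → ι} {W σ : Finset V}
    {B : Finset ι} (hσ : σ ⊆ {v ∈ W | color v ∈ B}) (hcard : σ.card = B.card)
    (hinj : (σ.image color).card = σ.card) : σ.image color = B :=
  Finset.eq_of_subset_of_card_le
    (Finset.image_subset_iff.2 fun _ hv => (Finset.mem_filter.1 (hσ hv)).2)
    (hcard.symm.trans hinj.symm).le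

lemma pushforward_eq_zero_or_eq_single [DecidableEq ι] {G : SimpleGraph V} {color : V → ι}
    {W : Finset V} {B : Finset ι} {z : Chain V}
    (hz : z ∈ indepChains G {v ∈ W | color v ∈ B} B.card) :
    pushforward color z = 0 ∨ pushforward color z = single B 1 := by
  have hspan : indepChains G {v ∈ W | color v ∈ B} B.card ≤
      (ZMod 2 ∙ (single B 1 : Chain ι)).comap (pushforward color) := by
    refine indepChains_le fun σ hσW _ hcard => ?_
    rw [Submodule.mem_comap, pushforward_single]
    split_ifs with hinj
    · rw [image_eq_of_subset_filter_of_card_image_eq hσW hcard hinj]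
      exact Submodule.mem_span_singleton_self _
    · exact zero_mem _
  obtain ⟨r, hr⟩ := Submodule.mem_span_singleton.1 (hspan hz)
  rw [← hr]
  fin_cases r
  · exact .inl (zero_smul _ _)
  · exact .inr (one_smul _ _)

lemma boundary_single_ne_zero [DecidableEq ι] {B : Finset ι} (hB : B.Nonempty) :
    boundary (single B 1) ≠ 0 := by
  obtain ⟨b, hb⟩ := hB
  intro h
  have hcone := boundary_cone b (single B 1)
  rw [cone_single, if_pos hb, map_zero, h, map_zero, add_zero] at hcone
  exact single_ne_zero.2 one_ne_zero hcone.symm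

variable [DecidableEq V] [DecidableEq ι] {G : SimpleGraph V}

-- The images of the simplices are chosen by induction on the dimension, `φ (∂ B)` being a cycle of
-- the acyclic complex on `X B`.
lemma exists_chainMap_of_isAcyclic {X : Finset ι → Finset V} (hX : Monotone X) {A : Finset ι}
    (h : ∀ B ⊆ A, IsAcyclic G (X B) B.card) :
    ∃ φ : Chain ι →ₗ[ZMod 2] Chain V, φ (single ∅ 1) = single ∅ 1 ∧ ∀ B ⊆ A,
      φ (single B 1) ∈ indepChains G (X B) B.card ∧
      boundary (φ (single B 1)) = φ (boundary (single B 1)) := by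
  have hfill : ∀ B ⊆ A, B.Nonempty → ∀ z ∈ indepChains G (X B) (B.card - 1), boundary z = 0 →
      ∃ w ∈ indepChains G (X B) B.card, boundary w = z := fun B hB hne z hz hbz => by
    simpa only [Nat.sub_add_cancel hne.card_pos] using
      h B hB _ (Nat.sub_one_lt_of_lt hne.card_pos) z hz hbz
  choose! fill hfill_mem hfill_boundary using hfill
  obtain ⟨φ, hφ_empty, hφ_fill⟩ := exists_linearMap_single_eq_fill fill
  refine ⟨φ, hφ_empty, fun B => ?_⟩
  induction B using Finset.strongInduction with
  | H B ih =>
    intro hBA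
    obtain rfl | hB := B.eq_empty_or_nonempty
    · rw [hφ_empty]
      exact ⟨single_mem_indepChains (Finset.empty_subset _) (by simp) rfl, by simp⟩
    have hfacet (b : ι) (hb : b ∈ B) := ih (B.erase b) (Finset.erase_ssubset hb)
      ((Finset.erase_subset b B).trans hBA)
    have hmem : φ (boundary (single B 1)) ∈ indepChains G (X B) (B.card - 1) := by
      rw [boundary_single, map_sum]
      refine sum_mem fun b hb => indepChains_mono (hX (Finset.erase_subset b B)) _ ?_
      exact Finset.card_erase_of_mem hb ▸ (hfacet b hb).1
    have hcycle : boundary (φ (boundary (single B 1))) = 0 := calc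
      boundary (φ (boundary (single B 1))) = φ (boundary (boundary (single B 1))) := by
        simp only [boundary_single, map_sum] at hfacet ⊢
        exact Finset.sum_congr rfl fun b hb => (hfacet b hb).2
      _ = 0 := by rw [boundary_boundary, map_zero]
    rw [hφ_fill B hB]
    exact ⟨hfill_mem B hBA hB _ hmem hcycle, hfill_boundary B hBA hB _ hmem hcycle⟩

/-- The topological Hall theorem, in its homological form. -/
theorem exists_transversal_of_isAcyclic {color : V → ι} {W : Finset V} {A : Finset ι}
    (h : ∀ B ⊆ A, IsAcyclic G {v ∈ W | color v ∈ B} B.card) :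
    ∃ S ⊆ W, G.IsIndepSet S ∧ S.image color = A ∧ Set.InjOn color S := by
  have hmono : Monotone fun B : Finset ι => ({v ∈ W | color v ∈ B} : Finset V) :=
    fun _ _ hBC => Finset.monotone_filter_right W fun _ _ hv => hBC hv
  obtain ⟨φ, hφ_empty, hφ⟩ := exists_chainMap_of_isAcyclic hmono h
  have hpush (B : Finset ι) : B ⊆ A → pushforward color (φ (single B 1)) = single B 1 := by
    induction B using Finset.strongInduction with
    | H B ih =>
      intro hBA
      obtain rfl | hB := B.eq_empty_or_nonempty
      · simp [hφ_empty]
      refine (pushforward_eq_zero_or_eq_single (hφ B hBA).1).resolve_left fun hzero =>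
        boundary_single_ne_zero hB ?_
      calc boundary (single B 1) = pushforward color (φ (boundary (single B 1))) := by
            simp only [boundary_single, map_sum]
            exact Finset.sum_congr rfl fun b hb => (ih _ (Finset.erase_ssubset hb)
              ((Finset.erase_subset b B).trans hBA)).symm
        _ = boundary (pushforward color (φ (single B 1))) := by
            rw [← (hφ B hBA).2, boundary_pushforward]
        _ = 0 := by rw [hzero, map_zero]
  by_contra! hS
  have hker : indepChains G {v ∈ W | color v ∈ A} A.card ≤ LinearMap.ker (pushforward color) := by
    refine indepChains_le fun σ hσW hσ hcard => ?_
    rw [LinearMap.mem_ker, pushforward_single]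
    exact if_neg fun hinj => hS σ (hσW.trans (Finset.filter_subset _ W)) hσ
      (image_eq_of_subset_filter_of_card_image_eq hσW hcard hinj) (Finset.card_image_iff.1 hinj)
  have hzero : pushforward color (φ (single A 1)) = 0 := hker (hφ A subset_rfl).1
  rw [hpush A subset_rfl] at hzero
  exact single_ne_zero.2 one_ne_zero hzero

end IndependentTransversals

section ClawFree

open SimpleGraph

variable {V V' ι κ : Type*} {G : SimpleGraph V}

/-- No star with `c + 1` leaves is an induced subgraph of `G`. The neighbourhoods are closed, which
matters only for `c = 0`. -/
def IsClawFree (G : SimpleGraph V) (c : ℕ) : Prop :=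
  ∀ (v : V) (I : Finset V), G.IsIndepSet I → (∀ x ∈ I, x = v ∨ G.Adj v x) → I.card ≤ c

lemma isIndepSet_sup {H : SimpleGraph V} {S : Set V} :
    (G ⊔ H).IsIndepSet S ↔ G.IsIndepSet S ∧ H.IsIndepSet S := by
  simp only [IsIndepSet, Set.Pairwise, sup_adj, not_or]
  grind

lemma IsClawFree.sup {H : SimpleGraph V} {c d : ℕ} (hG : IsClawFree G c) (hH : IsClawFree H d) :
    IsClawFree (G ⊔ H) (c + d) := by
  classical
  intro v I hI hvI
  obtain ⟨hIG, hIH⟩ := isIndepSet_sup.1 hI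
  have hunion : I ⊆ {x ∈ I | x = v ∨ G.Adj v x} ∪ {x ∈ I | x = v ∨ H.Adj v x} := fun x hx => by
    have hxv := hvI x hx
    rw [sup_adj] at hxv
    simp only [Finset.mem_union, Finset.mem_filter, hx, true_and]
    tauto
  calc I.card ≤ _ := Finset.card_le_card hunion
    _ ≤ _ := Finset.card_union_le _ _
    _ ≤ c + d := Nat.add_le_add
      (hG v _ (hIG.mono (Finset.filter_subset _ I)) fun x hx => (Finset.mem_filter.1 hx).2)
      (hH v _ (hIH.mono (Finset.filter_subset _ I)) fun x hx => (Finset.mem_filter.1 hx).2)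

lemma IsClawFree.card_le_mul_card_of_dominates {c : ℕ} (hG : IsClawFree G c) {D I : Finset V}
    (hI : G.IsIndepSet I) (hD : Dominates G D I) : I.card ≤ c * D.card := by
  classical
  have hcover : I ⊆ D.biUnion fun y => {x ∈ I | x = y ∨ G.Adj y x} := fun x hx => by
    obtain ⟨y, hy, hxy⟩ := hD x hx
    exact Finset.mem_biUnion.2 ⟨y, hy, Finset.mem_filter.2 ⟨hx, hxy⟩⟩
  calc I.card ≤ _ := Finset.card_le_card hcover
    _ ≤ D.card * c := Finset.card_biUnion_le_card_mul _ _ _ fun y _ =>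
      hG y _ (hI.mono (Finset.filter_subset _ I)) fun x hx => (Finset.mem_filter.1 hx).2
    _ = c * D.card := Nat.mul_comm _ _

/-- The disjoint union of the complete graphs on the fibers of `f`. If `f` sends the edges of a
hypergraph to their vertices in one class, it records which edges share a vertex of that class. -/
def fiberGraph (f : V → κ) : SimpleGraph V where
  Adj x y := x ≠ y ∧ f x = f y
  symm := ⟨fun _ _ h => ⟨h.1.symm, h.2.symm⟩⟩
  loopless := ⟨fun _ h => h.1 rfl⟩

lemma isIndepSet_fiberGraph {f : V → κ} {S : Set V} :
    (fiberGraph f).IsIndepSet S ↔ Set.InjOn f S := by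
  refine ⟨fun h x hx y hy hxy => ?_, fun h x hx y hy hne hxy => hne (h hx hy hxy.2)⟩
  by_contra hne
  exact h hx hy hne ⟨hne, hxy⟩

lemma isClawFree_fiberGraph (f : V → κ) : IsClawFree (fiberGraph f) 1 := by
  intro v I hI hv
  have hfv : ∀ x ∈ I, f x = f v := fun x hx => (hv x hx).elim (congrArg f) fun h => h.2.symm
  exact Finset.card_le_one.2 fun x hx y hy =>
    isIndepSet_fiberGraph.1 hI hx hy ((hfv x hx).trans (hfv y hy).symm)

lemma isIndepSet_sum {H : SimpleGraph V'} {S : Finset (V ⊕ V')} :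
    (G ⊕g H).IsIndepSet S ↔ G.IsIndepSet S.toLeft ∧ H.IsIndepSet S.toRight := by
  simp [IsIndepSet, Set.Pairwise]

lemma Dominates.toLeft {H : SimpleGraph V'} {D : Finset (V ⊕ V')} {I : Finset V} {J : Finset V'}
    (h : Dominates (G ⊕g H) D (I.disjSum J)) : Dominates G D.toLeft I := fun x hx => by
  obtain ⟨y | y, hy, hxy⟩ := h (.inl x) (Finset.inl_mem_disjSum.2 hx)
  · exact ⟨y, Finset.mem_toLeft.2 hy, by simpa using hxy⟩
  · simp at hxy

lemma Dominates.toRight {H : SimpleGraph V'} {D : Finset (V ⊕ V')} {I : Finset V} {J : Finset V'}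
    (h : Dominates (G ⊕g H) D (I.disjSum J)) : Dominates H D.toRight J := fun x hx => by
  obtain ⟨y | y, hy, hxy⟩ := h (.inr x) (Finset.inr_mem_disjSum.2 hx)
  · simp at hxy
  · exact ⟨y, Finset.mem_toRight.2 hy, by simpa using hxy⟩

end ClawFree

section RainbowIndependentSets

variable {V V' ι : Type*} {G : SimpleGraph V} {H : SimpleGraph V'}

lemma isAcyclic_disjSum_of_dominates [DecidableEq V] [DecidableEq V'] {W I : Finset V}
    {X J : Finset V'} {d k : ℕ} (hIW : I ⊆ W) (hJX : J ⊆ X) (hI : G.IsIndepSet I)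
    (hJ : H.IsIndepSet J) (hDI : ∀ D ⊆ W, Dominates G D I → k ≤ D.card + d)
    (hDJ : ∀ D ⊆ X, Dominates H D J → d ≤ D.card) :
    IsAcyclic (G ⊕g H) (W.disjSum X) k := by
  refine isAcyclic_of_dominates (Finset.disjSum_mono hIW hJX)
    (isIndepSet_sum.2 ⟨by simpa using hI, by simpa using hJ⟩) fun D hD hdom => ?_
  have hleft := hDI D.toLeft (fun x hx => by simpa using hD (Finset.mem_toLeft.1 hx)) hdom.toLeft
  have hright := hDJ D.toRight (fun x hx => by simpa using hD (Finset.mem_toRight.1 hx))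
    hdom.toRight
  rw [← Finset.card_toLeft_add_card_toRight]
  lia

lemma isAcyclic_disjSum_product [DecidableEq V] [DecidableEq ι] {W I : Finset V} {B : Finset ι}
    {d : ℕ} (hIW : I ⊆ W) (hI : G.IsIndepSet I)
    (hD : ∀ D ⊆ W, Dominates G D I → B.card ≤ D.card + d) :
    IsAcyclic (G ⊕g fiberGraph (Prod.snd : ι × Fin d → Fin d)) (W.disjSum (B ×ˢ Finset.univ))
      B.card := by
  obtain rfl | ⟨b, hb⟩ := B.eq_empty_or_nonempty
  · exact isAcyclic_zero _
  have hfst {x : ι × Fin d} (hx : x ∈ ({b} ×ˢ Finset.univ : Finset (ι × Fin d))) : x.1 = b :=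
    Finset.mem_singleton.1 (Finset.mem_product.1 hx).1
  have hJ : (fiberGraph Prod.snd).IsIndepSet ({b} ×ˢ Finset.univ : Finset (ι × Fin d)) :=
    isIndepSet_fiberGraph.2 fun _ hx _ hy hxy => Prod.ext ((hfst hx).trans (hfst hy).symm) hxy
  refine isAcyclic_disjSum_of_dominates hIW
    (Finset.product_subset_product_left (Finset.singleton_subset_iff.2 hb)) hI hJ hD
    fun D _ hdom => ?_
  simpa using (isClawFree_fiberGraph _).card_le_mul_card_of_dominates hJ hdom

-- The deficiency version follows from the case `d = 0` by adding `d` dummy vertices of every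
-- color, of which an independent set contains at most `d`.
theorem exists_partial_transversal_of_dominates [DecidableEq ι] {color : V → ι} {W : Finset V}
    {A : Finset ι} {d : ℕ}
    (h : ∀ B ⊆ A, ∃ I ⊆ {v ∈ W | color v ∈ B}, G.IsIndepSet I ∧
      ∀ D ⊆ {v ∈ W | color v ∈ B}, Dominates G D I → B.card ≤ D.card + d) :
    ∃ S ⊆ W, G.IsIndepSet S ∧ Set.InjOn color S ∧ A.card ≤ S.card + d := by
  classical
  let dummies (B : Finset ι) : Finset (ι × Fin d) := B ×ˢ Finset.univ
  obtain ⟨S, hSW, hS, hSA, hinj⟩ := exists_transversal_of_isAcyclic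
    (G := G ⊕g fiberGraph (Prod.snd : ι × Fin d → Fin d)) (color := Sum.elim color Prod.fst)
    (W := W.disjSum (dummies A)) (A := A) fun B hB => by
      have hfilter : {v ∈ W.disjSum (dummies A) | Sum.elim color Prod.fst v ∈ B} =
          ({v ∈ W | color v ∈ B} : Finset V).disjSum (dummies B) := by
        ext (v | ⟨a, i⟩)
        · simp
        · simpa [dummies] using fun ha => hB ha
      obtain ⟨I, hIW, hI, hD⟩ := h B hB
      rw [hfilter]
      exact isAcyclic_disjSum_product hIW hI hD
  obtain ⟨hleft, hright⟩ := isIndepSet_sum.1 hS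
  refine ⟨S.toLeft, fun v hv => by simpa using hSW (Finset.mem_toLeft.1 hv), hleft,
    fun x hx y hy hxy => Sum.inl_injective
      (hinj (Finset.mem_toLeft.1 hx) (Finset.mem_toLeft.1 hy) hxy), ?_⟩
  have hdummies : S.toRight.card ≤ d := by
    simpa using Finset.card_le_card_of_injOn Prod.snd (fun x _ => Finset.mem_univ x.2)
      (isIndepSet_fiberGraph.1 hright)
  rw [← hSA, Finset.card_image_of_injOn hinj, ← Finset.card_toLeft_add_card_toRight]
  lia

theorem IsClawFree.exists_rainbow_isIndepSet [DecidableEq ι] {c t : ℕ} (hG : IsClawFree G c)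
    (hc : 0 < c) {color : V → ι} {W : Finset V} {A : Finset ι}
    (h : ∀ B ⊆ A, ∃ I ⊆ {v ∈ W | color v ∈ B}, G.IsIndepSet I ∧ t ≤ (A \ B).card + I.card) :
    ∃ S ⊆ W, G.IsIndepSet S ∧ Set.InjOn color S ∧ t ≤ c * S.card := by
  have hbound (B : Finset ι) (hB : B ⊆ A) : ∃ I ⊆ {v ∈ W | color v ∈ B}, G.IsIndepSet I ∧
      ∀ D, Dominates G D I → t ⌈/⌉ c ≤ (A \ B).card + D.card := by
    obtain ⟨I, hIW, hI, ht⟩ := h B hB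
    refine ⟨I, hIW, hI, fun D hD => (ceilDiv_le_iff_le_smul hc).2 ?_⟩
    calc t ≤ (A \ B).card + I.card := ht
      _ ≤ c * (A \ B).card + c * D.card := Nat.add_le_add (Nat.le_mul_of_pos_left _ hc)
        (hG.card_le_mul_card_of_dominates hI hD)
      _ = c • ((A \ B).card + D.card) := (Nat.mul_add _ _ _).symm
  have hA : t ⌈/⌉ c ≤ A.card := by
    obtain ⟨I, hIW, -, hD⟩ := hbound ∅ (Finset.empty_subset A)
    simpa using hD ∅ fun x hx => by simpa using hIW hx
  obtain ⟨S, hSW, hS, hinj, hcard⟩ := exists_partial_transversal_of_dominates (G := G)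
    (color := color) (W := W) (A := A) (d := A.card - t ⌈/⌉ c) fun B hB => by
      obtain ⟨I, hIW, hI, hD⟩ := hbound B hB
      refine ⟨I, hIW, hI, fun D _ hdom => ?_⟩
      have hdeficiency := hD D hdom
      have hsdiff := Finset.card_sdiff_add_card_eq_card hB
      lia
  exact ⟨S, hSW, hS, hinj, (ceilDiv_le_iff_le_smul hc).1 (by lia)⟩

end RainbowIndependentSets

section CoversAndMatchings

variable {V α β γ : Type*}

/-- König's theorem for the bipartite multigraph with edge set `E` in which `e` joins `f e` to
`g e`. -/
theorem exists_bipartite_matching_of_le_cover {E : Finset V} {f : V → α} {g : V → β} {t : ℕ}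
    (ht : ∀ (S : Finset α) (T : Finset β), (∀ e ∈ E, f e ∈ S ∨ g e ∈ T) → t ≤ S.card + T.card) :
    ∃ M ⊆ E, Set.InjOn f M ∧ Set.InjOn g M ∧ t ≤ M.card := by
  classical
  obtain ⟨M, hME, hg, hf, hM⟩ := (isClawFree_fiberGraph g).exists_rainbow_isIndepSet (t := t)
    one_pos (color := f) (W := E) (A := E.image f) fun B _ => by
      obtain ⟨I, hIE, hinj, himage⟩ := Finset.exists_subset_injOn_image_eq_of_surjOn
        (f := g) {e ∈ E | f e ∈ B} ({e ∈ E | f e ∈ B}.image g)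
        (by simp [Set.surjOn_image])
      refine ⟨I, fun e he => Finset.mem_filter.2 (hIE he), isIndepSet_fiberGraph.2 hinj, ?_⟩
      rw [← Finset.card_image_of_injOn hinj, himage]
      refine ht _ _ fun e he => ?_
      by_cases hB : f e ∈ B
      · exact .inr (Finset.mem_image_of_mem g (Finset.mem_filter.2 ⟨he, hB⟩))
      · exact .inl (Finset.mem_sdiff.2 ⟨Finset.mem_image_of_mem f he, hB⟩)
  exact ⟨M, hME, hf, isIndepSet_fiberGraph.1 hg, by rwa [Nat.one_mul] at hM⟩

theorem exists_tripartite_matching_of_le_cover {E : Finset V} {f : V → α} {g : V → β} {h : V → γ}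
    {t : ℕ}
    (ht : ∀ (S₁ : Finset α) (S₂ : Finset β) (S₃ : Finset γ),
      (∀ e ∈ E, f e ∈ S₁ ∨ g e ∈ S₂ ∨ h e ∈ S₃) → t ≤ S₁.card + S₂.card + S₃.card) :
    ∃ M ⊆ E, Set.InjOn f M ∧ Set.InjOn g M ∧ Set.InjOn h M ∧ t ≤ 2 * M.card := by
  classical
  obtain ⟨M, hME, hgh, hf, hM⟩ :=
    ((isClawFree_fiberGraph g).sup (isClawFree_fiberGraph h)).exists_rainbow_isIndepSet (t := t)
      two_pos (color := f) (W := E) (A := E.image f) fun B _ => by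
        obtain ⟨I, hIE, hg, hh, hI⟩ := exists_bipartite_matching_of_le_cover
          (E := {e ∈ E | f e ∈ B}) (f := g) (g := h) (t := t - (E.image f \ B).card)
          fun S T hST => by
            have hcover : ∀ e ∈ E, f e ∈ E.image f \ B ∨ g e ∈ S ∨ h e ∈ T := fun e he => by
              by_cases hB : f e ∈ B
              · exact .inr (hST e (Finset.mem_filter.2 ⟨he, hB⟩))
              · exact .inl (Finset.mem_sdiff.2 ⟨Finset.mem_image_of_mem f he, hB⟩)
            have ht' := ht _ S T hcover
            lia
        exact ⟨I, hIE, isIndepSet_sup.2 ⟨isIndepSet_fiberGraph.2 hg, isIndepSet_fiberGraph.2 hh⟩,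
          by lia⟩
  obtain ⟨hg, hh⟩ := isIndepSet_sup.1 hgh
  exact ⟨M, hME, hf, isIndepSet_fiberGraph.1 hg, isIndepSet_fiberGraph.1 hh, hM⟩

variable {H : Multiset (α × β × γ)}

lemma IsCover.coverNum_le {S₁ : Finset α} {S₂ : Finset β} {S₃ : Finset γ}
    (h : IsCover H S₁ S₂ S₃) : coverNum H ≤ S₁.card + S₂.card + S₃.card :=
  Nat.sInf_le ⟨S₁, S₂, S₃, h, rfl⟩

lemma IsMatching.card_le_matchNum {M : Finset (α × β × γ)} (hM : IsMatching H M) :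
    M.card ≤ matchNum H := by
  classical
  refine le_csSup ⟨H.toFinset.card, ?_⟩ ⟨M, hM, rfl⟩
  rintro _ ⟨N, hN, rfl⟩
  exact Finset.card_le_card fun e he => Multiset.mem_toFinset.2 (hN.1 e he)

end CoversAndMatchings

theorem stmt1_general {α β γ : Type*} (H : Multiset (α × β × γ)) :
    coverNum H ≤ 2 * matchNum H := by
  classical
  obtain ⟨M, hMH, h₁, h₂, h₃, hM⟩ := exists_tripartite_matching_of_le_cover (E := H.toFinset)
    (f := fun e => e.1) (g := fun e => e.2.1) (h := fun e => e.2.2)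
    fun S₁ S₂ S₃ hS => IsCover.coverNum_le fun e he => hS e (Multiset.mem_toFinset.2 he)
  have hmatching : IsMatching H M := ⟨fun e he => Multiset.mem_toFinset.1 (hMH he),
    fun e he f hf hne => ⟨h₁.ne he hf hne, h₂.ne he hf hne, h₃.ne he hf hne⟩⟩
  exact hM.trans (Nat.mul_le_mul_left 2 hmatching.card_le_matchNum)

/-- Aharoni's Theorem: for every 3-partite 3-graph `H`, τ(H) ≤ 2ν(H). -/
theorem stmt1 {α β γ : Type*} [Fintype α] [Fintype β] [Fintype γ]
    [DecidableEq α] [DecidableEq β] [DecidableEq γ]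
    (H : Multiset (α × β × γ)) :
    coverNum H ≤ 2 * matchNum H :=
  stmt1_general H

end Tripartite
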